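/- Let b : [0,L] → ℝ be continuous with (1/L)∫₀ᴸ b(y) dy = 0, and let λ₀ := √a. Then the infimum defining the minimal speed can be restricted to a bounded interval: inf_{λ > 0} μ_b(λ)/λ = inf_{0 < λ ≤ λ₀} μ_b(λ)/λ. -/

import Mathlib

open Real Set MeasureTheory intervalIntegral

/-- The principal Neumann eigenvalue `μ_b(λ)` of
`ψ'' + (λ² + λ b(y) + a) ψ = μ ψ` on `(0, L)`, defined through the Rayleigh
quotient variational characterization
`μ_b(λ) = sup { ∫₀ᴸ (−ψ'² + (λ² + λ b + a) ψ²) / ∫₀ᴸ ψ² : ψ ∈ H¹((0,L)), ψ ≠ 0 }`. -/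
noncomputable def mu (L a : ℝ) (b : ℝ → ℝ) (l : ℝ) : ℝ :=
  sSup { m : ℝ | ∃ ψ : ℝ → ℝ, ContDiffOn ℝ 1 ψ (Icc 0 L) ∧
    (∃ y ∈ Icc (0 : ℝ) L, ψ y ≠ 0) ∧
    m = (∫ y in (0 : ℝ)..L, (-(deriv ψ y) ^ 2 + (l ^ 2 + l * b y + a) * (ψ y) ^ 2)) /
        (∫ y in (0 : ℝ)..L, (ψ y) ^ 2) }

/-- The KPP minimal front speed `c*(b) = inf_{λ>0} μ_b(λ)/λ`. -/
noncomputable def cstar (L a : ℝ) (b : ℝ → ℝ) : ℝ :=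
  sInf { v : ℝ | ∃ l : ℝ, 0 < l ∧ v = mu L a b l / l }

lemma aux_decomp (L a : ℝ) (hL : 0 < L) (b : ℝ → ℝ) (M : ℝ)
    (hb : ContinuousOn b (Icc 0 L)) (hM : ∀ y ∈ Icc (0 : ℝ) L, b y ≤ M) (ψ : ℝ → ℝ)
    (hψ : ContDiffOn ℝ 1 ψ (Icc 0 L)) (hne : ∃ y ∈ Icc (0 : ℝ) L, ψ y ≠ 0) :
    ∃ D B N : ℝ, 0 ≤ D ∧ 0 < N ∧ B ≤ M * N ∧ (∫ y in (0 : ℝ)..L, (ψ y) ^ 2) = N ∧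
      ∀ l : ℝ, (∫ y in (0 : ℝ)..L, (-(deriv ψ y) ^ 2 + (l ^ 2 + l * b y + a) * (ψ y) ^ 2))
        = -D + (l ^ 2 + a) * N + l * B := by
  have hc : ContinuousOn ψ (Icc 0 L) := hψ.continuousOn
  have hc2 : ContinuousOn (fun y => (ψ y) ^ 2) (Icc 0 L) := hc.pow 2
  have hd : ContinuousOn (fun y => (derivWithin ψ (Icc 0 L) y) ^ 2) (Icc 0 L) :=
    (hψ.continuousOn_derivWithin (uniqueDiffOn_Icc hL) le_rfl).pow 2
  have hbψ : ContinuousOn (fun y => b y * (ψ y) ^ 2) (Icc 0 L) := hb.mul hc2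
  have i2 := hc2.intervalIntegrable_of_Icc (μ := volume) hL.le
  have idv := hd.intervalIntegrable_of_Icc (μ := volume) hL.le
  have ib := hbψ.intervalIntegrable_of_Icc (μ := volume) hL.le
  refine ⟨∫ y in (0 : ℝ)..L, (derivWithin ψ (Icc 0 L) y) ^ 2,
    ∫ y in (0 : ℝ)..L, b y * (ψ y) ^ 2, ∫ y in (0 : ℝ)..L, (ψ y) ^ 2, ?_, ?_, ?_, rfl, ?_⟩
  · exact integral_nonneg hL.le fun y _ => sq_nonneg _
  · obtain ⟨y, hy, hyn⟩ := hne
    exact integral_pos hL hc2 (fun y _ => sq_nonneg _) ⟨y, hy, by positivity⟩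
  · rw [← intervalIntegral.integral_const_mul]
    exact integral_mono_on hL.le ib (i2.const_mul M)
      fun y hy => mul_le_mul_of_nonneg_right (hM y hy) (sq_nonneg _)
  · intro l
    have idn : IntervalIntegrable (fun y => -(derivWithin ψ (Icc 0 L) y) ^ 2) volume 0 L :=
      idv.neg
    rw [← intervalIntegral.integral_neg, ← intervalIntegral.integral_const_mul,
      ← intervalIntegral.integral_const_mul,
      ← intervalIntegral.integral_add idn (i2.const_mul _),
      ← intervalIntegral.integral_add (idn.add (i2.const_mul _)) (ib.const_mul _)]
    apply integral_congr_Ioo_of_le hL.le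
    intro y hy
    have : derivWithin ψ (Icc 0 L) y = deriv ψ y :=
      derivWithin_of_mem_nhds (Icc_mem_nhds hy.1 hy.2)
    simp only [this]
    ring

/-- For continuous mean-zero `b` on `[0,L]`, the infimum defining the
KPP minimal speed can be restricted to `0 < λ ≤ λ₀ := √a`. -/
theorem stmt0 (L a : ℝ) (hL : 0 < L) (ha : 0 < a) (b : ℝ → ℝ)
    (hb : ContinuousOn b (Icc 0 L))
    (hmean : (1 / L) * ∫ y in (0 : ℝ)..L, b y = 0) :
    sInf { v : ℝ | ∃ l : ℝ, 0 < l ∧ v = mu L a b l / l } =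
      sInf { v : ℝ | ∃ l : ℝ, 0 < l ∧ l ≤ Real.sqrt a ∧ v = mu L a b l / l } := by
  obtain ⟨M, hM⟩ := (isCompact_Icc (a := (0:ℝ)) (b := L)).bddAbove_image hb
  have hM' : ∀ y ∈ Icc (0 : ℝ) L, b y ≤ M := fun y hy => hM ⟨y, hy, rfl⟩
  have hmean0 : ∫ y in (0 : ℝ)..L, b y = 0 := by
    rcases mul_eq_zero.1 hmean with h | h
    · exact absurd h (by positivity)
    · exact h
  have hbdd : ∀ l : ℝ, 0 < l → BddAbove { m : ℝ | ∃ ψ : ℝ → ℝ, ContDiffOn ℝ 1 ψ (Icc 0 L) ∧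
      (∃ y ∈ Icc (0 : ℝ) L, ψ y ≠ 0) ∧
      m = (∫ y in (0 : ℝ)..L, (-(deriv ψ y) ^ 2 + (l ^ 2 + l * b y + a) * (ψ y) ^ 2)) /
        (∫ y in (0 : ℝ)..L, (ψ y) ^ 2) } := by
    intro l hl
    refine ⟨l ^ 2 + a + l * M, ?_⟩
    rintro m ⟨ψ, h1, h2, rfl⟩
    obtain ⟨D, B, N, hD, hN, hB, hNe, hI⟩ := aux_decomp L a hL b M hb hM' ψ h1 h2
    rw [hI, hNe, div_le_iff₀ hN]
    nlinarith [mul_le_mul_of_nonneg_left hB hl.le]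
  have hnonneg : ∀ l : ℝ, 0 < l → 0 ≤ mu L a b l := by
    intro l hl
    have hone : ContDiffOn ℝ 1 (fun _ : ℝ => (1 : ℝ)) (Icc 0 L) := contDiffOn_const
    refine le_trans ?_ (le_csSup (hbdd l hl) ⟨fun _ => 1, hone,
      ⟨0, ⟨le_rfl, hL.le⟩, one_ne_zero⟩, rfl⟩)
    have ib := hb.intervalIntegrable_of_Icc (μ := volume) hL.le
    have : (∫ y in (0 : ℝ)..L, (-(deriv (fun _ : ℝ => (1 : ℝ)) y) ^ 2
        + (l ^ 2 + l * b y + a) * (1 : ℝ) ^ 2)) = (l ^ 2 + a) * L := by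
      have e : ∀ y : ℝ, (-(deriv (fun _ : ℝ => (1 : ℝ)) y) ^ 2
        + (l ^ 2 + l * b y + a) * (1 : ℝ) ^ 2) = (l ^ 2 + a) + l * b y := by
        intro y
        simp only [deriv_const]
        ring
      simp only [e]
      rw [intervalIntegral.integral_add intervalIntegrable_const (ib.const_mul l),
        intervalIntegral.integral_const_mul, hmean0]
      simp
      ring
    rw [this]
    apply div_nonneg (by positivity)
    exact integral_nonneg hL.le fun y _ => sq_nonneg _
  have hs : 0 < Real.sqrt a := Real.sqrt_pos.2 ha
  have hsq : Real.sqrt a ^ 2 = a := Real.sq_sqrt ha.le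
  have hkey : ∀ l : ℝ, Real.sqrt a ≤ l →
      mu L a b (Real.sqrt a) / Real.sqrt a ≤ mu L a b l / l := by
    intro l hsl
    have hl : 0 < l := hs.trans_le hsl
    rw [div_le_iff₀ hs]
    have hone : ContDiffOn ℝ 1 (fun _ : ℝ => (1 : ℝ)) (Icc 0 L) := contDiffOn_const
    refine csSup_le ⟨_, fun _ => 1, hone, ⟨0, ⟨le_rfl, hL.le⟩, one_ne_zero⟩, rfl⟩ ?_
    rintro m ⟨ψ, h1, h2, rfl⟩
    have hle := le_csSup (hbdd l hl) ⟨ψ, h1, h2, rfl⟩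
    obtain ⟨D, B, N, hD, hN, hB, hNe, hI⟩ := aux_decomp L a hL b M hb hM' ψ h1 h2
    rw [hI, hNe] at hle
    rw [hI, hNe]
    change _ ≤ mu L a b l at hle
    rw [← div_le_iff₀ hs]
    refine le_trans ?_ (div_le_div_of_nonneg_right hle hl.le)
    rw [div_div, div_div, div_le_div_iff₀ (by positivity) (by positivity)]
    generalize Real.sqrt a = s at *
    subst hsq
    have e : (-D + (l ^ 2 + s ^ 2) * N + l * B) * (N * s)
        - (-D + (s ^ 2 + s ^ 2) * N + s * B) * (N * l)
        = N * (D * (l - s) + N * s * (l - s) ^ 2) := by ring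
    have : 0 ≤ N * (D * (l - s) + N * s * (l - s) ^ 2) := by
      have := sub_nonneg.2 hsl
      positivity
    linarith
  apply le_antisymm
  · apply csInf_le_csInf
    · refine ⟨0, ?_⟩
      rintro v ⟨l, hl, rfl⟩
      exact div_nonneg (hnonneg l hl) hl.le
    · exact ⟨_, Real.sqrt a, hs, le_rfl, rfl⟩
    · rintro v ⟨l, hl, _, rfl⟩
      exact ⟨l, hl, rfl⟩
  · have hB : BddBelow { v : ℝ | ∃ l : ℝ, 0 < l ∧ l ≤ Real.sqrt a ∧ v = mu L a b l / l } := by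
      refine ⟨0, ?_⟩
      rintro v ⟨l, hl, _, rfl⟩
      exact div_nonneg (hnonneg l hl) hl.le
    refine le_csInf ⟨_, Real.sqrt a, hs, rfl⟩ ?_
    rintro v ⟨l, hl, rfl⟩
    rcases le_total l (Real.sqrt a) with h | h
    · exact csInf_le hB ⟨l, hl, h, rfl⟩
    · exact (csInf_le hB ⟨_, hs, le_rfl, rfl⟩).trans (hkey l h)
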